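/- Let α > 0, k > (α+3)/4, T > 0, and let Ã_k(τ,x,y) = τ^{−1/2} ∫_{ℝ} e^{−i·sgn(ξ)·π/4} |ξ|^{1/2} (1+|ξ|^α)^{1/2} (1+ξ²)^{−k} e^{−iτξ/(1+|ξ|^α)} e^{i(x + y²/(4τ))ξ} e^{i(y²/(4τ))ξ|ξ|^α} dξ. Let h : [0,T] → L¹(ℝ²) be continuous. Then for every t ∈ (0,T] the function V(t,x,y) := ∫_{0}^{t} ∫_{ℝ²} Ã_k(t−s, x−x′, y−y′) h(s,x′,y′) dx′dy′ ds is well defined (the s-integrand is bounded by C(t−s)^{−1/2}‖h(s)‖_{L¹}, which is integrable on (0,t)), is continuous and bounded in (x,y), and for every fixed y ∈ ℝ satisfies V(t,x,y) → 0 as |x| → ∞. -/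

import Mathlib

open MeasureTheory Filter

/-- The `ξ`-integrand of the KP-BBM kernel `Ã_k(τ,x,y)`. -/
noncomputable def AkInt (α k τ x y : ℝ) (ξ : ℝ) : ℂ :=
  Complex.exp (-Complex.I * (Real.sign ξ : ℂ) * ((Real.pi / 4 : ℝ) : ℂ)) *
    ((|ξ| ^ (2⁻¹ : ℝ) : ℝ) : ℂ) * (((1 + |ξ| ^ α) ^ (2⁻¹ : ℝ) : ℝ) : ℂ) *
    (((1 + ξ ^ 2) ^ (-k) : ℝ) : ℂ) *
    Complex.exp (-Complex.I * ((τ * ξ / (1 + |ξ| ^ α) : ℝ) : ℂ)) *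
    Complex.exp (Complex.I * (((x + y ^ 2 / (4 * τ)) * ξ : ℝ) : ℂ)) *
    Complex.exp (Complex.I * ((y ^ 2 / (4 * τ) * (ξ * |ξ| ^ α) : ℝ) : ℂ))

/-- The KP-BBM kernel `Ã_k(τ,x,y)`. -/
noncomputable def Ak (α k τ x y : ℝ) : ℂ :=
  ((τ ^ (-(2⁻¹) : ℝ) : ℝ) : ℂ) * ∫ ξ : ℝ, AkInt α k τ x y ξ


noncomputable def Aamp (α k ξ : ℝ) : ℝ :=
  |ξ| ^ (2⁻¹ : ℝ) * (1 + |ξ| ^ α) ^ (2⁻¹ : ℝ) * (1 + ξ ^ 2) ^ (-k)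

lemma Aamp_nonneg (α k ξ : ℝ) : 0 ≤ Aamp α k ξ := by
  unfold Aamp; positivity

lemma norm_exp_I_mul (r : ℝ) : ‖Complex.exp (Complex.I * (r : ℂ))‖ = 1 := by
  rw [mul_comm]; exact Complex.norm_exp_ofReal_mul_I r

lemma norm_AkInt (α k τ x y ξ : ℝ) : ‖AkInt α k τ x y ξ‖ = Aamp α k ξ := by
  have h1 : ‖Complex.exp (-Complex.I * (Real.sign ξ : ℂ) * ((Real.pi / 4 : ℝ) : ℂ))‖ = 1 := by
    rw [← norm_exp_I_mul (-(Real.sign ξ * (Real.pi / 4)))]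
    congr 2; push_cast; ring
  have h2 : ‖Complex.exp (-Complex.I * ((τ * ξ / (1 + |ξ| ^ α) : ℝ) : ℂ))‖ = 1 := by
    refine Eq.trans ?_ (norm_exp_I_mul (-(τ * ξ / (1 + |ξ| ^ α))))
    congr 2; push_cast; ring
  unfold AkInt Aamp
  rw [norm_mul, norm_mul, norm_mul, norm_mul, norm_mul, norm_mul, h1, h2, norm_exp_I_mul,
    norm_exp_I_mul, Complex.norm_real, Complex.norm_real, Complex.norm_real,
    Real.norm_of_nonneg (by positivity), Real.norm_of_nonneg (by positivity),
    Real.norm_of_nonneg (by positivity)]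
  ring

lemma Aamp_integrable (α k : ℝ) (hα : 0 < α) (hk : (α + 3) / 4 < k) :
    Integrable (Aamp α k) := by
  have hr : (Module.finrank ℝ ℝ : ℝ) < 2 * (k - (1 + α) / 4) := by
    simp; linarith
  have hi := (integrable_rpow_neg_one_add_norm_sq (μ := (volume : Measure ℝ)) hr).const_mul
    ((2:ℝ) ^ (2⁻¹ : ℝ))
  refine hi.mono' (by unfold Aamp; exact (by fun_prop : Measurable _).aestronglyMeasurable) ?_
  refine Eventually.of_forall fun ξ => ?_
  rw [Real.norm_of_nonneg (Aamp_nonneg _ _ _)]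
  have hb : (0:ℝ) < 1 + ξ ^ 2 := by positivity
  have hb1 : (1:ℝ) ≤ 1 + ξ ^ 2 := by nlinarith [sq_nonneg ξ]
  have habs : |ξ| ≤ (1 + ξ ^ 2) ^ (2⁻¹ : ℝ) := by
    rw [← one_div, ← Real.sqrt_eq_rpow]
    apply Real.abs_le_sqrt; linarith
  have e1 : |ξ| ^ (2⁻¹ : ℝ) ≤ (1 + ξ ^ 2) ^ (4⁻¹ : ℝ) := by
    calc |ξ| ^ (2⁻¹ : ℝ) ≤ ((1 + ξ ^ 2) ^ (2⁻¹ : ℝ)) ^ (2⁻¹ : ℝ) :=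
          Real.rpow_le_rpow (abs_nonneg _) habs (by norm_num)
      _ = _ := by rw [← Real.rpow_mul hb.le]; norm_num
  have e2 : |ξ| ^ α ≤ (1 + ξ ^ 2) ^ (α / 2) := by
    calc |ξ| ^ α ≤ ((1 + ξ ^ 2) ^ (2⁻¹ : ℝ)) ^ α :=
          Real.rpow_le_rpow (abs_nonneg _) habs hα.le
      _ = _ := by rw [← Real.rpow_mul hb.le]; congr 1; ring
  have e3 : (1 + |ξ| ^ α) ^ (2⁻¹ : ℝ) ≤ (2:ℝ) ^ (2⁻¹ : ℝ) * (1 + ξ ^ 2) ^ (α / 4) := by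
    have : (1:ℝ) ≤ (1 + ξ ^ 2) ^ (α / 2) := Real.one_le_rpow hb1 (by positivity)
    calc (1 + |ξ| ^ α) ^ (2⁻¹ : ℝ) ≤ (2 * (1 + ξ ^ 2) ^ (α / 2)) ^ (2⁻¹ : ℝ) :=
          Real.rpow_le_rpow (by positivity) (by linarith) (by norm_num)
      _ = _ := by
        rw [Real.mul_rpow (by norm_num) (by positivity), ← Real.rpow_mul hb.le]
        congr 2; ring
  calc Aamp α k ξ ≤ (1 + ξ ^ 2) ^ (4⁻¹ : ℝ) * ((2:ℝ) ^ (2⁻¹ : ℝ) * (1 + ξ ^ 2) ^ (α / 4))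
        * (1 + ξ ^ 2) ^ (-k) := by
        unfold Aamp; gcongr
    _ = 2 ^ (2⁻¹ : ℝ) * ((1 + ξ ^ 2) ^ (4⁻¹ : ℝ) * (1 + ξ ^ 2) ^ (α / 4)
        * (1 + ξ ^ 2) ^ (-k)) := by ring
    _ = _ := by
      rw [← Real.rpow_add hb, ← Real.rpow_add hb, Real.norm_eq_abs, sq_abs]
      congr 2; ring

lemma measurable_sign' : Measurable Real.sign := by
  unfold Real.sign
  exact Measurable.ite measurableSet_Iio measurable_const
    (Measurable.ite measurableSet_Ioi measurable_const measurable_const)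

lemma AkInt_measurable (α k τ x y : ℝ) : Measurable (AkInt α k τ x y) := by
  unfold AkInt
  have := measurable_sign'
  fun_prop

lemma AkInt_integrable (α k τ x y : ℝ) (hα : 0 < α) (hk : (α + 3) / 4 < k) :
    Integrable (AkInt α k τ x y) :=
  (Aamp_integrable α k hα hk).mono' (AkInt_measurable _ _ _ _ _).aestronglyMeasurable
    (Eventually.of_forall fun ξ => (norm_AkInt _ _ _ _ _ _).le)

lemma norm_Ak_le (α k τ x y : ℝ) (hα : 0 < α) (hk : (α + 3) / 4 < k) (hτ : 0 < τ) :
    ‖Ak α k τ x y‖ ≤ (∫ ξ, Aamp α k ξ) * τ ^ (-(2⁻¹) : ℝ) := by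
  unfold Ak
  rw [norm_mul, Complex.norm_real, Real.norm_of_nonneg (by positivity), mul_comm]
  gcongr
  exact norm_integral_le_of_norm_le (Aamp_integrable α k hα hk)
    (Eventually.of_forall fun ξ => (norm_AkInt _ _ _ _ _ _).le)

lemma Ak_continuousAt (α k : ℝ) (hα : 0 < α) (hk : (α + 3) / 4 < k) (z : ℝ × ℝ × ℝ)
    (hz : 0 < z.1) : ContinuousAt (fun z : ℝ × ℝ × ℝ => Ak α k z.1 z.2.1 z.2.2) z := by
  unfold Ak
  refine ContinuousAt.mul ?_ ?_
  · refine Complex.continuous_ofReal.continuousAt.comp (f := fun z : ℝ × ℝ × ℝ => z.1 ^ (-(2⁻¹) : ℝ)) ?_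
    exact continuousAt_fst.rpow_const (Or.inl hz.ne')
  · refine continuousAt_of_dominated (bound := Aamp α k) ?_ ?_ (Aamp_integrable α k hα hk) ?_
    · exact Eventually.of_forall fun _ => (AkInt_measurable _ _ _ _ _).aestronglyMeasurable
    · exact Eventually.of_forall fun _ => Eventually.of_forall fun ξ => (norm_AkInt _ _ _ _ _ _).le
    · refine Eventually.of_forall fun ξ => ?_
      unfold AkInt
      have h4 : 4 * z.1 ≠ 0 := by positivity
      have hd : ContinuousAt (fun z : ℝ × ℝ × ℝ => z.2.2 ^ 2 / (4 * z.1)) z :=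
        ContinuousAt.div (by fun_prop) (by fun_prop) h4
      have hE : ∀ (f : ℝ × ℝ × ℝ → ℝ) (c : ℂ), ContinuousAt f z →
          ContinuousAt (fun z => Complex.exp (c * ((f z : ℝ) : ℂ))) z := by
        intro f c hf
        have := Complex.continuous_ofReal.continuousAt.comp (x := z) hf
        exact (continuousAt_const.mul this).cexp
      refine ((ContinuousAt.mul continuousAt_const (hE _ _ ?_)).mul (hE _ _ ?_)).mul (hE _ _ ?_)
      · fun_prop
      · exact (ContinuousAt.add (by fun_prop) hd).mul continuousAt_const
      · exact hd.mul continuousAt_const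

lemma Ak_tendsto (α k τ y : ℝ) :
    Tendsto (fun x => Ak α k τ x y) (cocompact ℝ) (nhds 0) := by
  have h1 := Real.tendsto_integral_exp_smul_cocompact (AkInt α k τ 0 y)
  have hc : (-(2 * Real.pi)⁻¹ : ℝ) ≠ 0 := by
    have := Real.pi_pos
    simp [this.ne']
  have h2 : Tendsto (fun x : ℝ => x * (-(2 * Real.pi)⁻¹)) (cocompact ℝ) (cocompact ℝ) :=
    (Homeomorph.mulRight₀ _ hc).isClosedEmbedding.tendsto_cocompact
  have h3 := (h1.comp h2).const_mul ((τ ^ (-(2⁻¹) : ℝ) : ℝ) : ℂ)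
  rw [mul_zero] at h3
  refine h3.congr fun x => ?_
  unfold Ak
  congr 1
  refine integral_congr_ae (Eventually.of_forall fun ξ => ?_)
  simp only [Circle.smul_def, Real.fourierChar_apply, smul_eq_mul]
  unfold AkInt
  have : Complex.exp (Complex.I * (((x + y ^ 2 / (4 * τ)) * ξ : ℝ) : ℂ)) =
      Complex.exp (↑(2 * Real.pi * -(ξ * (x * -(2 * Real.pi)⁻¹))) * Complex.I) *
      Complex.exp (Complex.I * (((0 + y ^ 2 / (4 * τ)) * ξ : ℝ) : ℂ)) := by
    rw [← Complex.exp_add]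
    congr 1
    have e : (2 * Real.pi * -(ξ * (x * -(2 * Real.pi)⁻¹))) = ξ * x := by
      have := Real.pi_pos
      field_simp
    rw [e]
    push_cast
    ring
  rw [this]
  ring

/-- Duhamel term for KP-BBM type equations: for `α > 0`, `k > (α+3)/4` and
`h : [0,T] → L¹(ℝ²)` continuous, for each `t ∈ (0,T]` the function
`V(t,x,y) = ∫_0^t ∫_{ℝ²} Ã_k(t-s, x-x', y-y') h(s,x',y') dx'dy'ds` is well defined,
continuous and bounded in `(x,y)`, and tends to `0` as `|x| → ∞` for fixed `y`. -/
theorem KPBBM_duhamel_term (α k T : ℝ) (hα : 0 < α) (hk : (α + 3) / 4 < k) (hT : 0 < T)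
    (h : ℝ → ℝ × ℝ → ℂ)
    (hInt : ∀ s ∈ Set.Icc (0 : ℝ) T, Integrable (h s))
    (hCont : ∀ s ∈ Set.Icc (0 : ℝ) T,
      Tendsto (fun s' : ℝ => ∫ p : ℝ × ℝ, ‖h s' p - h s p‖)
        (nhdsWithin s (Set.Icc (0 : ℝ) T)) (nhds 0)) :
    ∀ t ∈ Set.Ioc (0 : ℝ) T,
      (∃ C : ℝ, ∀ s ∈ Set.Ioo (0 : ℝ) t, ∀ x y : ℝ,
        Integrable (fun p : ℝ × ℝ => Ak α k (t - s) (x - p.1) (y - p.2) * h s p) ∧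
        ‖∫ p : ℝ × ℝ, Ak α k (t - s) (x - p.1) (y - p.2) * h s p‖ ≤
          C * (t - s) ^ (-(2⁻¹) : ℝ) * ∫ p : ℝ × ℝ, ‖h s p‖) ∧
      (∀ x y : ℝ, IntegrableOn
        (fun s : ℝ => ∫ p : ℝ × ℝ, Ak α k (t - s) (x - p.1) (y - p.2) * h s p)
        (Set.Ioo (0 : ℝ) t)) ∧
      Continuous (fun q : ℝ × ℝ => ∫ s in Set.Ioo (0 : ℝ) t,
        ∫ p : ℝ × ℝ, Ak α k (t - s) (q.1 - p.1) (q.2 - p.2) * h s p) ∧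
      (∃ C : ℝ, ∀ x y : ℝ,
        ‖∫ s in Set.Ioo (0 : ℝ) t,
            ∫ p : ℝ × ℝ, Ak α k (t - s) (x - p.1) (y - p.2) * h s p‖ ≤ C) ∧
      (∀ y : ℝ, Tendsto (fun x : ℝ => ∫ s in Set.Ioo (0 : ℝ) t,
          ∫ p : ℝ × ℝ, Ak α k (t - s) (x - p.1) (y - p.2) * h s p)
        (cocompact ℝ) (nhds 0)) := by
  intro t ht
  obtain ⟨ht0, htT⟩ := ht
  set M : ℝ := ∫ ξ, Aamp α k ξ with hM
  have hM0 : 0 ≤ M := integral_nonneg (Aamp_nonneg α k)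
  have hsub : ∀ s ∈ Set.Ioo (0:ℝ) t, s ∈ Set.Icc (0:ℝ) T :=
    fun s hs => ⟨hs.1.le, hs.2.le.trans htT⟩
  -- continuity of the kernel in the space variables
  have hKc : ∀ τ : ℝ, 0 < τ → ∀ x y : ℝ,
      Continuous (fun p : ℝ × ℝ => Ak α k τ (x - p.1) (y - p.2)) := by
    intro τ hτ x y
    refine continuous_iff_continuousAt.2 fun p => ?_
    exact (Ak_continuousAt α k hα hk (τ, x - p.1, y - p.2) hτ).comp
      (f := fun p : ℝ × ℝ => (τ, x - p.1, y - p.2)) (by fun_prop)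
  have hKm : ∀ s ∈ Set.Ioo (0:ℝ) t, ∀ τ : ℝ, 0 < τ → ∀ x y : ℝ, AEStronglyMeasurable
      (fun p : ℝ × ℝ => Ak α k τ (x - p.1) (y - p.2) * h s p) volume := fun s hs τ hτ x y =>
    (hKc τ hτ x y).aestronglyMeasurable.mul (hInt s (hsub s hs)).aestronglyMeasurable
  have hKb : ∀ s : ℝ, ∀ τ : ℝ, 0 < τ → ∀ x y : ℝ, ∀ p : ℝ × ℝ,
      ‖Ak α k τ (x - p.1) (y - p.2) * h s p‖ ≤ M * τ ^ (-(2⁻¹) : ℝ) * ‖h s p‖ := by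
    intro s τ hτ x y p
    rw [norm_mul]
    gcongr
    exact norm_Ak_le α k τ _ _ hα hk hτ
  have hKi : ∀ s ∈ Set.Ioo (0:ℝ) t, ∀ τ : ℝ, 0 < τ → ∀ x y : ℝ, Integrable
      (fun p : ℝ × ℝ => Ak α k τ (x - p.1) (y - p.2) * h s p) := fun s hs τ hτ x y =>
    ((hInt s (hsub s hs)).norm.const_mul _).mono' (hKm s hs τ hτ x y)
      (Eventually.of_forall (hKb s τ hτ x y))
  have hB : ∀ s ∈ Set.Ioo (0:ℝ) t, ∀ x y : ℝ,
      ‖∫ p : ℝ × ℝ, Ak α k (t - s) (x - p.1) (y - p.2) * h s p‖ ≤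
          M * (t - s) ^ (-(2⁻¹) : ℝ) * ∫ p : ℝ × ℝ, ‖h s p‖ := by
    intro s hs x y
    rw [← integral_const_mul]
    exact norm_integral_le_of_norm_le ((hInt s (hsub s hs)).norm.const_mul _)
      (Eventually.of_forall (hKb s _ (sub_pos.2 hs.2) x y))
  -- the L¹ norm is bounded
  have hN : ContinuousOn (fun s => ∫ p : ℝ × ℝ, ‖h s p‖) (Set.Icc (0:ℝ) T) := by
    intro s hs
    refine tendsto_iff_dist_tendsto_zero.2 ?_
    refine squeeze_zero' (Eventually.of_forall fun _ => dist_nonneg) ?_ (hCont s hs)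
    filter_upwards [self_mem_nhdsWithin] with s' hs'
    rw [Real.dist_eq, ← integral_sub (hInt s' hs').norm (hInt s hs).norm]
    rw [← Real.norm_eq_abs]
    refine (norm_integral_le_of_norm_le ((hInt s' hs').sub (hInt s hs)).norm ?_)
    exact Eventually.of_forall fun p => abs_norm_sub_norm_le _ _
  obtain ⟨N, hNb⟩ := isCompact_Icc.bddAbove_image hN
  have hNb' : ∀ s ∈ Set.Icc (0:ℝ) T, (∫ p : ℝ × ℝ, ‖h s p‖) ≤ N :=
    fun s hs => hNb (Set.mem_image_of_mem _ hs)
  have hB' : ∀ s ∈ Set.Ioo (0:ℝ) t, ∀ x y : ℝ,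
      ‖∫ p : ℝ × ℝ, Ak α k (t - s) (x - p.1) (y - p.2) * h s p‖ ≤
          M * (t - s) ^ (-(2⁻¹) : ℝ) * N := by
    intro s hs x y
    refine (hB s hs x y).trans ?_
    have : 0 < t - s := sub_pos.2 hs.2
    gcongr
    exact hNb' s (hsub s hs)
  have hbi : IntegrableOn (fun s : ℝ => M * (t - s) ^ (-(2⁻¹) : ℝ) * N) (Set.Ioo (0:ℝ) t) := by
    have h1 : IntervalIntegrable (fun x : ℝ => x ^ (-(2⁻¹) : ℝ)) volume 0 t :=
      intervalIntegral.intervalIntegrable_rpow' (by norm_num)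
    have h2 := (h1.comp_sub_left t).symm
    simp only [sub_self, sub_zero] at h2
    rw [intervalIntegrable_iff_integrableOn_Ioo_of_le ht0.le] at h2
    exact (h2.const_mul M).mul_const N
  -- continuity in s
  have hFc : ∀ x y : ℝ, ContinuousOn
      (fun s : ℝ => ∫ p : ℝ × ℝ, Ak α k (t - s) (x - p.1) (y - p.2) * h s p)
        (Set.Ioo (0 : ℝ) t) := by
    intro x y s hs
    have hts : 0 < t - s := sub_pos.2 hs.2
    have hpw : ContinuousAt (fun s' : ℝ => M * (t - s') ^ (-(2⁻¹) : ℝ)) s :=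
      continuousAt_const.mul
        (ContinuousAt.rpow_const (by fun_prop) (Or.inl hts.ne'))
    have hA : Tendsto (fun s' : ℝ => ∫ p : ℝ × ℝ,
        Ak α k (t - s') (x - p.1) (y - p.2) * (h s' p - h s p))
        (nhdsWithin s (Set.Ioo (0:ℝ) t)) (nhds 0) := by
      have hz : Tendsto (fun s' : ℝ => M * (t - s') ^ (-(2⁻¹) : ℝ) * ∫ p : ℝ × ℝ, ‖h s' p - h s p‖)
          (nhdsWithin s (Set.Ioo (0:ℝ) t)) (nhds 0) := by
        have := (hpw.tendsto.mono_left nhdsWithin_le_nhds).mul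
          ((hCont s (hsub s hs)).mono_left (nhdsWithin_mono s hsub))
        simpa using this
      refine squeeze_zero_norm' ?_ hz
      filter_upwards [self_mem_nhdsWithin] with s' hs'
      have hts' : 0 < t - s' := sub_pos.2 hs'.2
      rw [← integral_const_mul]
      refine norm_integral_le_of_norm_le
        (((hInt s' (hsub s' hs')).sub (hInt s (hsub s hs))).norm.const_mul _)
        (Eventually.of_forall fun p => ?_)
      rw [norm_mul]
      exact mul_le_mul_of_nonneg_right (norm_Ak_le α k _ _ _ hα hk hts') (norm_nonneg _)
    have hD : Tendsto (fun s' : ℝ => ∫ p : ℝ × ℝ,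
        Ak α k (t - s') (x - p.1) (y - p.2) * h s p)
        (nhdsWithin s (Set.Ioo (0:ℝ) t))
        (nhds (∫ p : ℝ × ℝ, Ak α k (t - s) (x - p.1) (y - p.2) * h s p)) := by
      have hlt : ∀ᶠ s' in nhdsWithin s (Set.Ioo (0:ℝ) t),
          M * (t - s') ^ (-(2⁻¹) : ℝ) < M * (t - s) ^ (-(2⁻¹) : ℝ) + 1 :=
        (hpw.tendsto.mono_left nhdsWithin_le_nhds).eventually_lt_const (lt_add_one _)
      refine tendsto_integral_filter_of_dominated_convergence
        (fun p => (M * (t - s) ^ (-(2⁻¹) : ℝ) + 1) * ‖h s p‖) ?_ ?_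
        ((hInt s (hsub s hs)).norm.const_mul _) ?_
      · filter_upwards [self_mem_nhdsWithin] with s' hs'
        exact hKm s hs _ (sub_pos.2 hs'.2) x y
      · filter_upwards [self_mem_nhdsWithin, hlt] with s' hs' hl
        exact Eventually.of_forall fun p => (hKb s _ (sub_pos.2 hs'.2) x y p).trans
          (mul_le_mul_of_nonneg_right hl.le (norm_nonneg _))
      · refine Eventually.of_forall fun p => ?_
        have hc : ContinuousAt (fun s' : ℝ => Ak α k (t - s') (x - p.1) (y - p.2)) s :=
          (Ak_continuousAt α k hα hk (t - s, x - p.1, y - p.2) hts).comp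
            (f := fun s' : ℝ => (t - s', x - p.1, y - p.2)) (by fun_prop)
        exact (hc.tendsto.mono_left nhdsWithin_le_nhds).mul_const _
    have hS := hA.add hD
    rw [zero_add] at hS
    refine hS.congr' ?_
    filter_upwards [self_mem_nhdsWithin] with s' hs'
    have hts' : 0 < t - s' := sub_pos.2 hs'.2
    have e : ∀ p : ℝ × ℝ, Ak α k (t - s') (x - p.1) (y - p.2) * (h s' p - h s p) =
      Ak α k (t - s') (x - p.1) (y - p.2) * h s' p -
        Ak α k (t - s') (x - p.1) (y - p.2) * h s p := fun p => mul_sub _ _ _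
    simp_rw [e]
    rw [integral_sub (hKi s' hs' _ hts' x y) (hKi s hs _ hts' x y)]
    ring
  have hFm : ∀ x y : ℝ, AEStronglyMeasurable
      (fun s : ℝ => ∫ p : ℝ × ℝ, Ak α k (t - s) (x - p.1) (y - p.2) * h s p)
        (volume.restrict (Set.Ioo (0 : ℝ) t)) := fun x y =>
    (hFc x y).aestronglyMeasurable measurableSet_Ioo
  have hFb : ∀ x y : ℝ, ∀ᵐ s ∂(volume.restrict (Set.Ioo (0 : ℝ) t)),
      ‖∫ p : ℝ × ℝ, Ak α k (t - s) (x - p.1) (y - p.2) * h s p‖ ≤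
          M * (t - s) ^ (-(2⁻¹) : ℝ) * N := fun x y =>
    (ae_restrict_iff' measurableSet_Ioo).2 (Eventually.of_forall fun s hs => hB' s hs x y)
  refine ⟨⟨M, fun s hs x y => ⟨hKi s hs _ (sub_pos.2 hs.2) x y, hB s hs x y⟩⟩,
    fun x y => hbi.mono' (hFm x y) (hFb x y), ?_,
    ⟨_, fun x y => norm_integral_le_of_norm_le hbi (hFb x y)⟩, ?_⟩
  · refine continuous_iff_continuousAt.2 fun q => ?_
    refine continuousAt_of_dominated (Eventually.of_forall fun q => hFm q.1 q.2)
      (Eventually.of_forall fun q => hFb q.1 q.2) hbi ?_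
    refine (ae_restrict_iff' measurableSet_Ioo).2 (Eventually.of_forall fun s hs => ?_)
    have hts : 0 < t - s := sub_pos.2 hs.2
    refine continuousAt_of_dominated
      (Eventually.of_forall fun q => hKm s hs _ hts q.1 q.2)
      (Eventually.of_forall fun q => Eventually.of_forall (hKb s _ hts q.1 q.2))
      ((hInt s (hsub s hs)).norm.const_mul _) (Eventually.of_forall fun p => ?_)
    refine ContinuousAt.mul ?_ continuousAt_const
    exact (Ak_continuousAt α k hα hk (t - s, q.1 - p.1, q.2 - p.2) hts).comp
      (f := fun q : ℝ × ℝ => (t - s, q.1 - p.1, q.2 - p.2)) (by fun_prop)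
  · intro y
    have hcg : (cocompact ℝ).IsCountablyGenerated := by
      rw [cocompact_eq_atBot_atTop]; infer_instance
    rw [← integral_zero ℝ ℂ (μ := volume.restrict (Set.Ioo (0:ℝ) t))]
    refine tendsto_integral_filter_of_dominated_convergence _
      (Eventually.of_forall fun x => hFm x y) (Eventually.of_forall fun x => hFb x y) hbi ?_
    refine (ae_restrict_iff' measurableSet_Ioo).2 (Eventually.of_forall fun s hs => ?_)
    have hts : 0 < t - s := sub_pos.2 hs.2
    rw [← integral_zero (ℝ × ℝ) ℂ (μ := volume)]
    refine tendsto_integral_filter_of_dominated_convergence _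
      (Eventually.of_forall fun x => hKm s hs _ hts x y)
      (Eventually.of_forall fun x => Eventually.of_forall (hKb s _ hts x y))
      ((hInt s (hsub s hs)).norm.const_mul _) (Eventually.of_forall fun p => ?_)
    have hsh : Tendsto (fun x : ℝ => x - p.1) (cocompact ℝ) (cocompact ℝ) :=
      (Homeomorph.subRight p.1).isClosedEmbedding.tendsto_cocompact
    have := ((Ak_tendsto α k (t - s) (y - p.2)).comp hsh).mul_const (h s p)
    simpa using this
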